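/- arXiv:1506.06545 — 2 statements merged into one kernel-verified Lean document; each statement's English description precedes it below -/
import Mathlib

section
/- Fix τ ∈ ℍ, n₀,n₁,n₂,n₃, A ∈ ℂ and p ∈ ℂ with 2p ∉ Λ_τ and p + ω_k/2 ∉ Λ_τ for all k, and let B = A² − ζ(2p|τ)A − (3/4)℘(2p|τ) − Σ_k n_k(n_k+1)℘(p + ω_k/2|τ). Then the Laurent expansion of the generalized Lamé potential I at z = p in the variable u = z − p is I(z;τ) = (3/4)u⁻² − Au⁻¹ + A² + H₁u + H₂u² + O(u³), where H₁ = Σ_{k=0}^{3} n_k(n_k+1)℘′(p + ω_k/2|τ) + (3/4)℘′(2p|τ) − A℘(2p|τ) and H₂ = (1/2)[Σ_{k=0}^{3} n_k(n_k+1)℘″(p + ω_k/2|τ) + (3/4)℘″(2p|τ) + (3/40)g₂(τ) − A℘′(2p|τ)]. -/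
open Complex Filter Topology Asymptotics

noncomputable section

/-- membership in the lattice `Λ_τ = ℤ + τℤ`. -/
def InLattice (τ z : ℂ) : Prop := ∃ m n : ℤ, z = (m : ℂ) + (n : ℂ) * τ

/-- the half-period generators `ω₀ = 0, ω₁ = 1, ω₂ = τ, ω₃ = 1 + τ`. -/
def halfp (τ : ℂ) : Fin 4 → ℂ := ![0, 1, τ, 1 + τ]

/-- the Weierstrass elliptic function `℘(z|τ)`. -/
def wp (τ z : ℂ) : ℂ :=
  z⁻¹ ^ 2 + ∑' w : {w : ℤ × ℤ // w ≠ 0},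
    ((z - ((w.1.1 : ℂ) + (w.1.2 : ℂ) * τ))⁻¹ ^ 2 - ((w.1.1 : ℂ) + (w.1.2 : ℂ) * τ)⁻¹ ^ 2)

/-- `℘′(z|τ)`, the `z`-derivative of `℘`. -/
def wpd (τ z : ℂ) : ℂ := deriv (wp τ) z

/-- `℘″(z|τ)`. -/
def wpdd (τ z : ℂ) : ℂ := deriv (wpd τ) z

def e1 (τ : ℂ) : ℂ := wp τ (1 / 2)
def e2 (τ : ℂ) : ℂ := wp τ (τ / 2)
def e3 (τ : ℂ) : ℂ := wp τ ((1 + τ) / 2)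

def g2 (τ : ℂ) : ℂ := -4 * (e1 τ * e2 τ + e1 τ * e3 τ + e2 τ * e3 τ)

/-- `zeta` is the Weierstrass zeta function: for each `τ ∈ ℍ`, `zeta τ` is odd, satisfies
`∂ζ/∂z = -℘` off the lattice, and `ζ(z|τ) - 1/z → 0` as `z → 0`. -/
def IsWeierstrassZeta (zeta : ℂ → ℂ → ℂ) : Prop :=
  ∀ τ : ℂ, 0 < τ.im →
    (∀ z : ℂ, zeta τ (-z) = - zeta τ z) ∧
    (∀ z : ℂ, ¬ InLattice τ z → HasDerivAt (zeta τ) (- wp τ z) z) ∧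
    Tendsto (fun z => zeta τ z - z⁻¹) (𝓝[≠] (0 : ℂ)) (𝓝 0)

/-- `eta1 τ = ζ(z+1|τ) - ζ(z|τ)` is the first quasi-period. -/
def IsEta1 (zeta : ℂ → ℂ → ℂ) (eta1 : ℂ → ℂ) : Prop :=
  ∀ τ : ℂ, 0 < τ.im → ∀ z : ℂ, ¬ InLattice τ z →
    eta1 τ = zeta τ (z + 1) - zeta τ z

/-- `eta2 τ = ζ(z+τ|τ) - ζ(z|τ)` is the second quasi-period. -/
def IsEta2 (zeta : ℂ → ℂ → ℂ) (eta2 : ℂ → ℂ) : Prop :=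
  ∀ τ : ℂ, 0 < τ.im → ∀ z : ℂ, ¬ InLattice τ z →
    eta2 τ = zeta τ (z + τ) - zeta τ z

/-- `sigma` is the Weierstrass sigma function: entire, odd, with
`∂/∂z log σ = ζ` off the lattice and `σ(z|τ)/z → 1` as `z → 0`. -/
def IsWeierstrassSigma (zeta sigma : ℂ → ℂ → ℂ) : Prop :=
  ∀ τ : ℂ, 0 < τ.im →
    (∀ z : ℂ, sigma τ (-z) = - sigma τ z) ∧
    Differentiable ℂ (sigma τ) ∧
    (∀ z : ℂ, ¬ InLattice τ z → HasDerivAt (sigma τ) (zeta τ z * sigma τ z) z) ∧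
    Tendsto (fun z => sigma τ z / z) (𝓝[≠] (0 : ℂ)) (𝓝 1)

/-- the Hamiltonian system (142) for `(p(τ), A(τ))` on `V`. -/
def HamSystem (n : Fin 4 → ℂ) (zeta : ℂ → ℂ → ℂ) (eta1 : ℂ → ℂ)
    (V : Set ℂ) (p A : ℂ → ℂ) : Prop :=
  ∀ τ ∈ V,
    HasDerivAt p ((-Complex.I / (4 * (Real.pi : ℂ))) *
      (2 * A τ - zeta τ (2 * p τ) + 2 * p τ * eta1 τ)) τ ∧
    HasDerivAt A ((Complex.I / (4 * (Real.pi : ℂ))) *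
      ((2 * wp τ (2 * p τ) + 2 * eta1 τ) * A τ - (3 / 2) * wpd τ (2 * p τ)
        - ∑ k : Fin 4, n k * (n k + 1) * wpd τ (p τ + halfp τ k / 2))) τ

/-- the generalized Lamé potential `I(z;τ)`. -/
def Ipot (n : Fin 4 → ℂ) (zeta : ℂ → ℂ → ℂ) (A B p τ z : ℂ) : ℂ :=
  (∑ k : Fin 4, n k * (n k + 1) * wp τ (z + halfp τ k / 2))
    + (3 / 4) * (wp τ (z + p) + wp τ (z - p))
    + A * (zeta τ (z + p) - zeta τ (z - p)) + B

end

/-!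
Around `z = p` only `℘(z - p)` and `ζ(z - p)` are singular, and
`℘(u) = u⁻² + (g₂/20) u² + O(u³)`, `ζ(u) = u⁻¹ + O(u³)`; every other term is analytic, so the
expansion is a sum of second-order Taylor expansions.

The `g₂` in the Laurent series of `℘` is the Eisenstein sum, and identifying it with
`-4 (e₁e₂ + e₁e₃ + e₂e₃)` requires the `eᵢ` to be distinct roots of `4X³ - g₂X - g₃`. If `℘` and
`℘'` agree at `v` and `w`, then `d(u) = ℘(v + u) - ℘(w + u)` solves the linear equation
`d'' = 6 (℘(v + u) + ℘(w + u)) d` with vanishing initial data, so `d = 0` and `v - w` is a period.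
-/

section AnalyticFunctions

variable {𝕜 : Type*} [NontriviallyNormedField 𝕜] [CharZero 𝕜]

lemma isBigO_sub_taylor_two [CompleteSpace 𝕜] {f g : 𝕜 → 𝕜} {x : 𝕜} (hf : AnalyticAt 𝕜 f x)
    (hfg : deriv f =ᶠ[𝓝 x] g) :
    (fun u => f (x + u) - (f x + g x * u + deriv g x / 2 * u ^ 2)) =O[𝓝 0] fun u => u ^ 3 := by
  have h := (hf.hasFPowerSeriesAt.isBigO_sub_partialSum_pow 3).trans
    (isBigO_of_le (g := fun u : 𝕜 => u ^ 3) _ fun u => by simp)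
  refine h.congr_left fun u => ?_
  rw [← hfg.eq_of_nhds, ← hfg.deriv_eq]
  simp only [FormalMultilinearSeries.partialSum, FormalMultilinearSeries.apply_eq_prod_smul_coeff,
    FormalMultilinearSeries.coeff_ofScalars, Finset.prod_const, Finset.card_univ, Fintype.card_fin,
    Finset.sum_range_succ, Finset.range_one, Finset.sum_singleton, iteratedDeriv_succ,
    iteratedDeriv_zero, Nat.factorial_zero, Nat.factorial_one, Nat.factorial_two, Nat.cast_one,
    Nat.cast_ofNat, smul_eq_mul]
  ring

lemma eventually_eq_zero_of_deriv_deriv_eq_smul {E : Type*} [NormedAddCommGroup E]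
    [NormedSpace 𝕜 E] [CompleteSpace E] {a : 𝕜 → 𝕜} {d : 𝕜 → E} {x : 𝕜}
    (ha : AnalyticAt 𝕜 a x) (hd : AnalyticAt 𝕜 d x) (hd0 : d x = 0) (hd1 : deriv d x = 0)
    (hode : deriv (deriv d) =ᶠ[𝓝 x] a • d) : ∀ᶠ z in 𝓝 x, d z = 0 := by
  rw [← analyticOrderAt_eq_top, ENat.eq_top_iff_forall_ge]
  intro n
  induction n with
  | zero => simp
  | succ n ih =>
    -- By the equation `d''` vanishes to the order of `d`; integrating twice raises that order by 2.
    have hdd : n ≤ analyticOrderAt (deriv (deriv d)) x := by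
      rw [analyticOrderAt_congr hode, analyticOrderAt_smul ha hd]
      exact ih.trans le_add_self
    have h1 := (analyticOrderAt_deriv_ge_iff hd.deriv hd1).mp hdd
    have h2 := (analyticOrderAt_deriv_ge_iff (n := n + 1) hd hd0).mp (by exact_mod_cast h1)
    exact_mod_cast le_self_add.trans h2

end AnalyticFunctions

lemma exists_analyticAt_eventuallyEq_of_hasDerivAt {E : Type*} [NormedAddCommGroup E]
    [NormedSpace ℂ E] [CompleteSpace E] {f g : ℂ → E} {x : ℂ} {y : E}
    (hf : Tendsto f (𝓝[≠] x) (𝓝 y)) (hfg : ∀ᶠ z in 𝓝[≠] x, HasDerivAt f (g z) z)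
    (hg : ContinuousAt g x) :
    ∃ F, AnalyticAt ℂ F x ∧ F x = y ∧ F =ᶠ[𝓝[≠] x] f ∧ deriv F =ᶠ[𝓝 x] g := by
  have hF : Function.update f x y =ᶠ[𝓝[≠] x] f := by
    filter_upwards [self_mem_nhdsWithin] with z hz using Function.update_of_ne hz _ _
  have hderiv : ∀ᶠ z in 𝓝[≠] x, HasDerivAt (Function.update f x y) (g z) z := by
    filter_upwards [hfg, eventually_eventually_nhdsWithin.mpr hF, self_mem_nhdsWithin]
      with z hz hFz hzx
    exact hz.congr_of_eventuallyEq (by rwa [isOpen_compl_singleton.nhdsWithin_eq hzx] at hFz)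
  have han : AnalyticAt ℂ (Function.update f x y) x :=
    analyticAt_of_differentiable_on_punctured_nhds_of_continuousAt
      (hderiv.mono fun z hz => hz.differentiableAt) (continuousAt_update_same.mpr hf)
  exact ⟨_, han, Function.update_self .., hF,
    (han.deriv.continuousAt.eventuallyEq_nhds_iff_eventuallyEq_nhdsNE hg).mp
      (hderiv.mono fun z hz => hz.deriv)⟩

lemma eq_of_three_roots_depressed_cubic {R : Type*} [CommRing R] [IsDomain R] {g h x y z : R}
    (hx : 4 * x ^ 3 - g * x - h = 0) (hy : 4 * y ^ 3 - g * y - h = 0)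
    (hz : 4 * z ^ 3 - g * z - h = 0) (hxy : x ≠ y) (hzx : z ≠ x) (hzy : z ≠ y) :
    g = -4 * (x * y + x * z + y * z) := by
  have quot_xy : 4 * (x ^ 2 + x * y + y ^ 2) - g = 0 :=
    mul_left_cancel₀ (sub_ne_zero.mpr hxy) (by linear_combination hx - hy)
  have quot_zx : 4 * (x ^ 2 + x * z + z ^ 2) - g = 0 :=
    mul_left_cancel₀ (sub_ne_zero.mpr hzx) (by linear_combination hz - hx)
  have sum_eq_zero : 4 * (x + y + z) = 0 :=
    mul_left_cancel₀ (sub_ne_zero.mpr hzy) (by linear_combination quot_zx - quot_xy)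
  linear_combination -quot_xy + (x + y) * sum_eq_zero

section Lattice

open scoped PeriodPair

variable (L : PeriodPair)

lemma countable_lattice : (L.lattice : Set ℂ).Countable :=
  Set.countable_coe_iff.mp (inferInstanceAs (Countable L.lattice))

lemma isPreconnected_compl_lattice : IsPreconnected (L.lattice : Set ℂ)ᶜ :=
  ((countable_lattice L).isConnected_compl_of_one_lt_rank (by simp)).isPreconnected

lemma eventually_nhds_notMem_lattice {x : ℂ} (hx : x ∉ L.lattice) : ∀ᶠ z in 𝓝 x, z ∉ L.lattice :=
  L.isClosed_lattice.isOpen_compl.mem_nhds hx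

lemma eventually_nhdsNE_notMem_lattice (x : ℂ) : ∀ᶠ z in 𝓝[≠] x, z ∉ L.lattice := by
  filter_upwards [self_mem_nhdsWithin,
    mem_nhdsWithin_of_mem_nhds (L.compl_lattice_sdiff_singleton_mem_nhds x)] with z hz hz' hzL
  exact hz' ⟨hzL, hz⟩

lemma hasDerivAt_weierstrassP {z : ℂ} (hz : z ∉ L.lattice) : HasDerivAt ℘[L] (℘'[L] z) z := by
  simpa using (L.analyticOnNhd_weierstrassP z hz).differentiableAt.hasDerivAt

lemma analyticAt_weierstrassP_add_const {z c : ℂ} (h : z + c ∉ L.lattice) :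
    AnalyticAt ℂ (fun y => ℘[L] (y + c)) z :=
  AnalyticAt.fun_comp (g := ℘[L]) (L.analyticOnNhd_weierstrassP _ h) (by fun_prop)

lemma tendsto_weierstrassP_cobounded {l : ℂ} (hl : l ∈ L.lattice) :
    Tendsto ℘[L] (𝓝[≠] l) (Bornology.cobounded ℂ) := by
  rw [tendsto_cobounded_iff_meromorphicOrderAt_neg (L.meromorphic_weierstrassP l),
    L.order_weierstrassP l hl]
  decide

lemma not_tendsto_weierstrassP_nhds {l : ℂ} (hl : l ∈ L.lattice) (c : ℂ) :
    ¬ Tendsto ℘[L] (𝓝[≠] l) (𝓝 c) :=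
  (tendsto_weierstrassP_cobounded L hl).not_tendsto (Metric.disjoint_nhds_cobounded c).symm

lemma exists_derivWeierstrassP_ne_zero : ∃ z ∉ L.lattice, ℘'[L] z ≠ 0 := by
  by_contra! h
  obtain ⟨c, hc⟩ := L.isClosed_lattice.isOpen_compl.exists_is_const_of_deriv_eq_zero
    (isPreconnected_compl_lattice L) L.differentiableOn_weierstrassP
    fun z hz => by simpa using h z hz
  refine not_tendsto_weierstrassP_nhds L (zero_mem _) c (tendsto_const_nhds.congr' ?_)
  filter_upwards [eventually_nhdsNE_notMem_lattice L 0] with z hz using (hc z hz).symm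

lemma derivWeierstrassP_mul_deriv_eq {z : ℂ} (hz : z ∉ L.lattice) :
    2 * ℘'[L] z * deriv ℘'[L] z = (12 * ℘[L] z ^ 2 - L.g₂) * ℘'[L] z := by
  have hP := hasDerivAt_weierstrassP L hz
  have hP' := (L.analyticOnNhd_derivWeierstrassP z hz).differentiableAt.hasDerivAt
  have hcubic := (((hP.pow 3).const_mul 4).sub (hP.const_mul L.g₂)).sub_const L.g₃
  have hrel : ℘'[L] ^ 2 =ᶠ[𝓝 z] fun y => 4 * ℘[L] y ^ 3 - L.g₂ * ℘[L] y - L.g₃ := by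
    filter_upwards [eventually_nhds_notMem_lattice L hz] with y hy using L.derivWeierstrassP_sq y hy
  have h := (hP'.pow 2).unique (hcubic.congr_of_eventuallyEq hrel)
  simp only [Nat.cast_ofNat, Nat.add_one_sub_one, pow_one] at h
  linear_combination h

lemma deriv_derivWeierstrassP {z : ℂ} (hz : z ∉ L.lattice) :
    deriv ℘'[L] z = 6 * ℘[L] z ^ 2 - L.g₂ / 2 := by
  have hP := L.analyticOnNhd_weierstrassP
  have hP' := L.analyticOnNhd_derivWeierstrassP
  have hmul : ∀ y ∈ (L.lattice : Set ℂ)ᶜ,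
      ℘'[L] y * (deriv ℘'[L] y - (6 * ℘[L] y ^ 2 - L.g₂ / 2)) = 0 := fun y hy => by
    linear_combination derivWeierstrassP_mul_deriv_eq L hy / 2
  have han : AnalyticOnNhd ℂ (fun y => deriv ℘'[L] y - (6 * ℘[L] y ^ 2 - L.g₂ / 2))
      (L.lattice : Set ℂ)ᶜ := fun y hy => by
    have := hP y hy
    have := hP'.deriv y hy
    fun_prop
  rcases hP'.eq_zero_or_eq_zero_of_mul_eq_zero han hmul
    (isPreconnected_compl_lattice L) with h | h
  · obtain ⟨y, hy, hne⟩ := exists_derivWeierstrassP_ne_zero L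
    exact absurd (h y hy) hne
  · exact sub_eq_zero.mp (h z hz)

lemma mem_lattice_of_eventually_weierstrassP_add_eq {c x : ℂ} (hx : x ∉ L.lattice)
    (hxc : x + c ∉ L.lattice) (h : ∀ᶠ z in 𝓝 x, ℘[L] (z + c) = ℘[L] z) : c ∈ L.lattice := by
  by_contra hc
  have hcount : ((L.lattice : Set ℂ) ∪ (· + c) ⁻¹' L.lattice).Countable :=
    (countable_lattice L).union ((countable_lattice L).preimage (add_left_injective c))
  have hP : AnalyticOnNhd ℂ ℘[L] ((L.lattice : Set ℂ) ∪ (· + c) ⁻¹' L.lattice)ᶜ := fun z hz =>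
    L.analyticOnNhd_weierstrassP z fun hzL => hz (Or.inl hzL)
  have hPc : AnalyticOnNhd ℂ (fun z => ℘[L] (z + c))
      ((L.lattice : Set ℂ) ∪ (· + c) ⁻¹' L.lattice)ᶜ := fun z hz =>
    analyticAt_weierstrassP_add_const L fun hzL => hz (Or.inr hzL)
  have heq := hPc.eqOn_of_preconnected_of_eventuallyEq hP
    (hcount.isConnected_compl_of_one_lt_rank (by simp)).isPreconnected (not_or.mpr ⟨hx, hxc⟩) h
  have hcont : ContinuousAt (fun z => ℘[L] (z + c)) 0 :=
    (analyticAt_weierstrassP_add_const L (by simpa using hc)).continuousAt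
  refine not_tendsto_weierstrassP_nhds L (zero_mem _) _
    ((hcont.tendsto.mono_left nhdsWithin_le_nhds).congr' ?_)
  filter_upwards [eventually_nhdsNE_notMem_lattice L 0, nhdsWithin_le_nhds
    ((continuous_add_const c).continuousAt.eventually
      (eventually_nhds_notMem_lattice L (by simpa using hc)))] with z hz hzc
  exact heq (not_or.mpr ⟨hz, hzc⟩)

lemma sub_mem_lattice_of_weierstrassP_eq {v w : ℂ} (hv : v ∉ L.lattice) (hw : w ∉ L.lattice)
    (h0 : ℘[L] v = ℘[L] w) (h1 : ℘'[L] v = ℘'[L] w) : v - w ∈ L.lattice := by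
  have hwc : w + (v - w) ∉ L.lattice := by simpa using hv
  have hP := L.analyticOnNhd_weierstrassP w hw
  have hPc : AnalyticAt ℂ (fun z => ℘[L] (z + (v - w))) w :=
    analyticAt_weierstrassP_add_const L hwc
  have hnear : ∀ᶠ z in 𝓝 w, z ∉ L.lattice ∧ z + (v - w) ∉ L.lattice :=
    (eventually_nhds_notMem_lattice L hw).and
      ((continuous_add_const _).continuousAt.eventually (eventually_nhds_notMem_lattice L hwc))
  have hderiv : deriv (fun z => ℘[L] (z + (v - w)) - ℘[L] z) =ᶠ[𝓝 w]
      fun z => ℘'[L] (z + (v - w)) - ℘'[L] z := by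
    filter_upwards [hnear] with z ⟨hz, hzc⟩
    exact (((hasDerivAt_weierstrassP L hzc).comp_add_const z _).fun_sub
      (hasDerivAt_weierstrassP L hz)).deriv
  have hode : deriv (deriv fun z => ℘[L] (z + (v - w)) - ℘[L] z) =ᶠ[𝓝 w]
      (fun z => 6 * (℘[L] (z + (v - w)) + ℘[L] z)) • fun z => ℘[L] (z + (v - w)) - ℘[L] z := by
    filter_upwards [hnear, hderiv.deriv] with z ⟨hz, hzc⟩ hdz
    have hP' {y : ℂ} (hy : y ∉ L.lattice) : HasDerivAt ℘'[L] (deriv ℘'[L] y) y :=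
      (L.analyticOnNhd_derivWeierstrassP y hy).differentiableAt.hasDerivAt
    rw [hdz, (((hP' hzc).comp_add_const z _).fun_sub (hP' hz)).deriv, deriv_derivWeierstrassP L hzc,
      deriv_derivWeierstrassP L hz, Pi.smul_apply', smul_eq_mul]
    ring
  refine mem_lattice_of_eventually_weierstrassP_add_eq L hw hwc ?_
  refine (eventually_eq_zero_of_deriv_deriv_eq_smul (by fun_prop) (by fun_prop) ?_ ?_ hode).mono
    fun z hz => sub_eq_zero.mp hz
  · simp [h0]
  · simp [hderiv.eq_of_nhds, h1]

lemma derivWeierstrassP_eq_zero_of_two_mul_mem {w : ℂ} (h : 2 * w ∈ L.lattice) :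
    ℘'[L] w = 0 := by
  have h1 := L.derivWeierstrassP_add_coe (-w) ⟨2 * w, h⟩
  rw [L.derivWeierstrassP_neg, show -w + 2 * w = w by ring] at h1
  linear_combination h1 / 2

lemma g₂_eq_of_two_mul_mem {a b : ℂ} (ha : a ∉ L.lattice) (hb : b ∉ L.lattice)
    (hab : a + b ∉ L.lattice) (h2a : 2 * a ∈ L.lattice) (h2b : 2 * b ∈ L.lattice) :
    L.g₂ = -4 * (℘[L] a * ℘[L] b + ℘[L] a * ℘[L] (a + b) + ℘[L] b * ℘[L] (a + b)) := by
  have h2ab : 2 * (a + b) ∈ L.lattice := by rw [mul_add]; exact add_mem h2a h2b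
  have root {w : ℂ} (hw : w ∉ L.lattice) (h2w : 2 * w ∈ L.lattice) :
      4 * ℘[L] w ^ 3 - L.g₂ * ℘[L] w - L.g₃ = 0 := by
    rw [← L.derivWeierstrassP_sq w hw, derivWeierstrassP_eq_zero_of_two_mul_mem L h2w]
    simp
  have distinct {v w : ℂ} (hv : v ∉ L.lattice) (hw : w ∉ L.lattice) (h2v : 2 * v ∈ L.lattice)
      (h2w : 2 * w ∈ L.lattice) (hvw : v - w ∉ L.lattice) : ℘[L] v ≠ ℘[L] w := fun h =>
    hvw (sub_mem_lattice_of_weierstrassP_eq L hv hw h (by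
      rw [derivWeierstrassP_eq_zero_of_two_mul_mem L h2v,
        derivWeierstrassP_eq_zero_of_two_mul_mem L h2w]))
  refine eq_of_three_roots_depressed_cubic (root ha h2a) (root hb h2b) (root hab h2ab)
    (distinct ha hb h2a h2b fun h => hab ?_) (distinct hab ha h2ab h2a (by simpa using hb))
    (distinct hab hb h2ab h2b (by simpa using ha))
  convert add_mem h h2b using 1
  ring

lemma weierstrassP_eq_inv_sq_add (z : ℂ) : ℘[L] z = z⁻¹ ^ 2 + ℘[L - (0 : ℂ)] z := by
  simpa [add_comm] using (L.weierstrassPExcept_add 0 z).symm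

lemma deriv_deriv_weierstrassPExcept_zero : deriv (deriv ℘[L - (0 : ℂ)]) 0 = L.g₂ / 10 := by
  have h : deriv (deriv ℘[L - (0 : ℂ)]) 0 = 6 * L.G 4 := by
    simpa [iteratedDeriv_succ, Nat.factorial] using
      L.iteratedDeriv_weierstrassPExcept_self 0 (n := 2)
  rw [h, PeriodPair.g₂]
  ring

lemma isBigO_weierstrassP_sub_laurent :
    (fun u : ℂ => ℘[L] u - (u⁻¹ ^ 2 + L.g₂ / 20 * u ^ 2)) =O[𝓝 (0 : ℂ)] fun u => u ^ 3 := by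
  refine (isBigO_sub_taylor_two (L.analyticAt_weierstrassPExcept 0) .rfl).congr_left fun u => ?_
  rw [weierstrassP_eq_inv_sq_add, deriv_deriv_weierstrassPExcept_zero]
  simp only [PeriodPair.weierstrassPExcept_zero, PeriodPair.deriv_weierstrassPExcept_same,
    PeriodPair.derivWeierstrassPExcept_zero_zero, zero_add]
  ring

lemma isBigO_weierstrassP_sub_taylor_two {x : ℂ} (hx : x ∉ L.lattice) :
    (fun u => ℘[L] (x + u) - (℘[L] x + ℘'[L] x * u + deriv ℘'[L] x / 2 * u ^ 2))
      =O[𝓝 (0 : ℂ)] fun u => u ^ 3 :=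
  isBigO_sub_taylor_two (L.analyticOnNhd_weierstrassP x hx) (by rw [L.deriv_weierstrassP])

section Zeta

variable {L} {ζ : ℂ → ℂ} (hζ : ∀ z ∉ L.lattice, HasDerivAt ζ (-℘[L] z) z)
include hζ

lemma isBigO_zeta_sub_inv (hζ0 : Tendsto (fun z => ζ z - z⁻¹) (𝓝[≠] 0) (𝓝 0)) :
    (fun u : ℂ => ζ u - u⁻¹) =O[𝓝[≠] (0 : ℂ)] fun u => u ^ 3 := by
  have hderiv : ∀ᶠ z in 𝓝[≠] (0 : ℂ),
      HasDerivAt (fun z => ζ z - z⁻¹) (-℘[L - (0 : ℂ)] z) z := by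
    filter_upwards [self_mem_nhdsWithin, eventually_nhdsNE_notMem_lattice L 0] with z hz hzL
    convert! (hζ z hzL).sub (hasDerivAt_inv hz) using 1
    rw [weierstrassP_eq_inv_sq_add]
    ring
  obtain ⟨F, hF, hF0, hFζ, hF'⟩ := exists_analyticAt_eventuallyEq_of_hasDerivAt hζ0 hderiv
    (L.analyticAt_weierstrassPExcept 0).continuousAt.neg
  refine ((isBigO_sub_taylor_two hF hF').mono nhdsWithin_le_nhds).congr' ?_ .rfl
  filter_upwards [hFζ] with u hu
  simp [hu, hF0]

lemma isBigO_zeta_sub_taylor_two {x : ℂ} (hx : x ∉ L.lattice) :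
    (fun u => ζ (x + u) - (ζ x - ℘[L] x * u - ℘'[L] x / 2 * u ^ 2))
      =O[𝓝 (0 : ℂ)] fun u => u ^ 3 := by
  have han : AnalyticAt ℂ ζ x := analyticAt_iff_eventually_differentiableAt.mpr
    ((eventually_nhds_notMem_lattice L hx).mono fun z hz => (hζ z hz).differentiableAt)
  have hderiv : deriv ζ =ᶠ[𝓝 x] fun z => -℘[L] z :=
    (eventually_nhds_notMem_lattice L hx).mono fun z hz => (hζ z hz).deriv
  refine (isBigO_sub_taylor_two han hderiv).congr_left fun u => ?_
  rw [deriv.fun_neg, L.deriv_weierstrassP]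
  ring

end Zeta

/-- The generalized Lamé potential of an arbitrary lattice, with a finite family of poles at `-w k`
of strength `c k` and with poles of strength `b` at `±p`. For the lattice `ℤ + τℤ`, the
half-periods `w` and `b = 3/4` it is `Ipot`; the zeta function enters as a parameter `ζ`. -/
noncomputable def lamePotential {ι : Type*} [Fintype ι] (c w : ι → ℂ) (ζ : ℂ → ℂ)
    (b A B p z : ℂ) : ℂ :=
  (∑ k, c k * ℘[L] (z + w k)) + b * (℘[L] (z + p) + ℘[L] (z - p))
    + A * (ζ (z + p) - ζ (z - p)) + B

theorem Ipot_expansion_at_p_general {ι : Type*} [Fintype ι] (c w : ι → ℂ) {ζ : ℂ → ℂ}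
    (hζ : ∀ z ∉ L.lattice, HasDerivAt ζ (-℘[L] z) z)
    (hζ0 : Tendsto (fun z => ζ z - z⁻¹) (𝓝[≠] 0) (𝓝 0)) (b A B : ℂ) {p : ℂ}
    (hp : 2 * p ∉ L.lattice) (hw : ∀ k, p + w k ∉ L.lattice) :
    (fun u => lamePotential L c w ζ b A B p (p + u) - (b * u⁻¹ ^ 2 - A * u⁻¹
        + ((∑ k, c k * ℘[L] (p + w k)) + b * ℘[L] (2 * p) + A * ζ (2 * p) + B)
        + ((∑ k, c k * ℘'[L] (p + w k)) + b * ℘'[L] (2 * p) - A * ℘[L] (2 * p)) * u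
        + 1 / 2 * ((∑ k, c k * deriv ℘'[L] (p + w k)) + b * deriv ℘'[L] (2 * p)
          + b / 10 * L.g₂ - A * ℘'[L] (2 * p)) * u ^ 2))
      =O[𝓝[≠] (0 : ℂ)] fun u => u ^ 3 := by
  have punctured {f : ℂ → ℂ} (hf : f =O[𝓝 0] fun u : ℂ => u ^ 3) :
      f =O[𝓝[≠] 0] fun u : ℂ => u ^ 3 := hf.mono nhdsWithin_le_nhds
  have sum_poles := IsBigO.fun_sum (s := .univ) fun k _ =>
    (punctured (isBigO_weierstrassP_sub_taylor_two L (hw k))).const_mul_left (c k)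
  have wp_far := (punctured (isBigO_weierstrassP_sub_taylor_two L hp)).const_mul_left b
  have wp_near := (punctured (isBigO_weierstrassP_sub_laurent L)).const_mul_left b
  have zeta_far := (punctured (isBigO_zeta_sub_taylor_two hζ hp)).const_mul_left A
  have zeta_near := (isBigO_zeta_sub_inv hζ hζ0).const_mul_left A
  refine ((((sum_poles.add wp_far).add wp_near).add zeta_far).sub zeta_near).congr_left fun u => ?_
  rw [lamePotential, show p + u + p = 2 * p + u by ring, add_sub_cancel_left]
  simp only [add_right_comm p u, mul_sub, mul_add, Finset.sum_sub_distrib, Finset.sum_add_distrib,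
    ← mul_assoc, ← Finset.sum_mul, mul_div_assoc', ← Finset.sum_div]
  ring

end Lattice

/-- The period pair `(1, τ)`, whose `℘`-function is `wp τ`. -/
def normalizedPeriodPair (τ : ℂ) (hτ : 0 < τ.im) : PeriodPair where
  ω₁ := 1
  ω₂ := τ
  indep := by
    rw [LinearIndependent.pair_iff]
    intro s t h
    have ht : t = 0 := by simpa [hτ.ne'] using congrArg Complex.im h
    have hs : s = 0 := by simpa [ht] using congrArg Complex.re h
    exact ⟨hs, ht⟩

section NormalizedLattice

open scoped PeriodPair

variable {τ : ℂ} (hτ : 0 < τ.im)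

lemma mem_lattice_normalizedPeriodPair {z : ℂ} :
    z ∈ (normalizedPeriodPair τ hτ).lattice ↔ InLattice τ z := by
  simp [PeriodPair.mem_lattice, InLattice, normalizedPeriodPair, eq_comm]

lemma wp_eq_weierstrassP : wp τ = ℘[normalizedPeriodPair τ hτ] := by
  ext z
  set L := normalizedPeriodPair τ hτ with hL
  have coe_symm (w : ℤ × ℤ) : (L.latticeEquivProd.symm w : ℂ) = w.1 + w.2 * τ := by
    rw [L.latticeEquiv_symm_apply]
    simp [hL, normalizedPeriodPair]
  rw [weierstrassP_eq_inv_sq_add, wp, PeriodPair.weierstrassPExcept,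
    ← L.latticeEquivProd.symm.toEquiv.tsum_eq,
    ← tsum_subtype_eq_of_support_subset (s := {w : ℤ × ℤ | w ≠ 0})]
  · congr 1
    refine tsum_congr fun w => ?_
    have hw : (w.1.1 + w.1.2 * τ : ℂ) ≠ 0 := by
      simpa [← coe_symm] using (w.2 : w.1 ≠ 0)
    simp [coe_symm, hw]
  · intro w hw h0
    simp [h0] at hw

lemma wpd_eq_derivWeierstrassP : wpd τ = ℘'[normalizedPeriodPair τ hτ] := by
  rw [← PeriodPair.deriv_weierstrassP, ← wp_eq_weierstrassP hτ]
  rfl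

lemma wpdd_eq_deriv_derivWeierstrassP : wpdd τ = deriv ℘'[normalizedPeriodPair τ hτ] := by
  rw [← wpd_eq_derivWeierstrassP hτ]
  rfl

lemma g2_eq_g₂ : g2 τ = (normalizedPeriodPair τ hτ).g₂ := by
  set L := normalizedPeriodPair τ hτ with hL
  have hsum : (1 / 2 + τ / 2 : ℂ) ∉ L.lattice := by
    simpa [hL, normalizedPeriodPair, inv_mul_eq_div] using
      (L.mul_ω₁_add_mul_ω₂_mem_lattice (α := 1 / 2) (β := 1 / 2)).not.mpr (by norm_num)
  rw [g₂_eq_of_two_mul_mem L L.ω₁_div_two_notMem_lattice L.ω₂_div_two_notMem_lattice hsum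
    (by simpa [mul_div_cancel₀] using L.ω₁_mem_lattice)
    (by simpa [mul_div_cancel₀] using L.ω₂_mem_lattice),
    g2, e1, e2, e3, wp_eq_weierstrassP hτ, add_div]
  rfl

lemma Ipot_eq_lamePotential (n : Fin 4 → ℂ) (zeta : ℂ → ℂ → ℂ) (A B p : ℂ) :
    Ipot n zeta A B p τ = lamePotential (normalizedPeriodPair τ hτ) (fun k => n k * (n k + 1))
      (fun k => halfp τ k / 2) (zeta τ) (3 / 4) A B p := by
  ext z
  rw [Ipot, lamePotential, wp_eq_weierstrassP hτ]

end NormalizedLattice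

/-- Lemma 2.10 (i): the Laurent expansion of the generalized Lamé
potential `I` at `z = p` in the variable `u = z - p`:
`I(p+u;τ) = (3/4)u⁻² - Au⁻¹ + A² + H₁u + H₂u² + O(u³)`. -/
theorem Ipot_expansion_at_p
    (τ : ℂ) (hτ : 0 < τ.im) (n : Fin 4 → ℂ) (A p : ℂ)
    (zeta : ℂ → ℂ → ℂ) (hzeta : IsWeierstrassZeta zeta)
    (hp2 : ¬ InLattice τ (2 * p))
    (hpk : ∀ k : Fin 4, ¬ InLattice τ (p + halfp τ k / 2))
    (B : ℂ)
    (hB : B = A ^ 2 - zeta τ (2 * p) * A - (3 / 4) * wp τ (2 * p)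
      - ∑ k : Fin 4, n k * (n k + 1) * wp τ (p + halfp τ k / 2))
    (H1 H2 : ℂ)
    (hH1 : H1 = (∑ k : Fin 4, n k * (n k + 1) * wpd τ (p + halfp τ k / 2))
      + (3 / 4) * wpd τ (2 * p) - A * wp τ (2 * p))
    (hH2 : H2 = (1 / 2) * ((∑ k : Fin 4, n k * (n k + 1) * wpdd τ (p + halfp τ k / 2))
      + (3 / 4) * wpdd τ (2 * p) + (3 / 40) * g2 τ - A * wpd τ (2 * p))) :
    (fun u : ℂ => Ipot n zeta A B p τ (p + u)
        - ((3 / 4) * u⁻¹ ^ 2 - A * u⁻¹ + A ^ 2 + H1 * u + H2 * u ^ 2))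
      =O[𝓝[≠] (0 : ℂ)] fun u => u ^ 3 := by
  obtain ⟨-, hζ, hζ0⟩ := hzeta τ hτ
  simp only [← mem_lattice_normalizedPeriodPair hτ, wp_eq_weierstrassP hτ] at hζ hp2 hpk
  refine (Ipot_expansion_at_p_general _ (fun k => n k * (n k + 1)) _ hζ hζ0 (3 / 4) A B hp2
    hpk).congr_left fun u => ?_
  rw [Ipot_eq_lamePotential hτ, hB, hH1, hH2, wpdd_eq_deriv_derivWeierstrassP hτ,
    wpd_eq_derivWeierstrassP hτ, wp_eq_weierstrassP hτ, g2_eq_g₂ hτ]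
  ring
end

section
/- For τ ∈ ℍ, let t(τ) = (e₃(τ) − e₁(τ))/(e₂(τ) − e₁(τ)). Then t is a holomorphic function on ℍ and satisfies dt/dτ = −(i/π) t(τ)(t(τ) − 1)(e₂(τ) − e₁(τ)). -/
open Complex Filter Topology Asymptotics

/-!
Since `t = (e₃ - e₁) / (e₂ - e₁)`, its derivative is `W / (e₂ - e₁)²`, where `W` is the Wronskian of
`e₂ - e₁` and `e₃ - e₁`, and the differential equation says that `W = -(i/π) P` for
`P = (e₂ - e₁)(e₃ - e₁)(e₃ - e₂)`. The translation `τ ↦ τ + 1` and the inversion `τ ↦ -1/τ` permute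
the `eᵢ`, up to a factor `τ²` in the second case. Hence `P` and `W` both have weight `6` under
`SL(2, ℤ)` with the quadratic character, and both vanish at the cusp, because `e₂ - e₁` and
`e₃ - e₁` tend to `-π²` there. Such an `f` has `f² = cΔ`: it vanishes nowhere unless it is
identically zero, and it is identically zero if it is `o(q)` with `q = exp(πiτ)`. The former gives
`e₂ ≠ e₁`. The latter applies to `W + (i/π) P`: if `e₃ - e₂ ~ a q`, then `P ~ π⁴ a q` and
`W ~ -π² d/dτ (e₃ - e₂) ~ -iπ³ a q`.
-/

open UpperHalfPlane (upperHalfPlaneSet isOpen_upperHalfPlaneSet)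

local notation "ℍₒ" => upperHalfPlaneSet
local notation "ℂ_ℤ" => integerComplement
local notation "I∞" => comap Complex.im atTop

lemma eventually_mem_upperHalfPlaneSet : ∀ᶠ τ in I∞, τ ∈ ℍₒ :=
  tendsto_comap.eventually (eventually_gt_atTop 0)

instance comap_im_atTop_neBot : NeBot I∞ :=
  NeBot.comap_of_surj atTop_neBot im_surjective

section Wronskian

variable {𝕜 : Type*} [NontriviallyNormedField 𝕜] {f g h φ f₁ g₁ : 𝕜 → 𝕜} {x : 𝕜}

/-- The Wronskian determinant `f g' - f' g`, with the sign convention of `Polynomial.wronskian`. -/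
noncomputable def wronskian (f g : 𝕜 → 𝕜) (x : 𝕜) : 𝕜 := f x * deriv g x - deriv f x * g x

lemma wronskian_swap (f g : 𝕜 → 𝕜) (x : 𝕜) : wronskian g f x = -wronskian f g x := by
  simp only [wronskian]
  ring

lemma wronskian_neg_left (f g : 𝕜 → 𝕜) (x : 𝕜) : wronskian (-f) g x = -wronskian f g x := by
  simp only [wronskian, Pi.neg_apply, deriv.neg]
  ring

lemma wronskian_sub_left_right (hf : DifferentiableAt 𝕜 f x) (hg : DifferentiableAt 𝕜 g x) :
    wronskian f (g - f) x = wronskian f g x := by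
  simp only [wronskian, Pi.sub_apply, deriv_sub hg hf]
  ring

lemma wronskian_mul_mul (hh : DifferentiableAt 𝕜 h x) (hf : DifferentiableAt 𝕜 f x)
    (hg : DifferentiableAt 𝕜 g x) :
    wronskian (h * f) (h * g) x = h x ^ 2 * wronskian f g x := by
  simp only [wronskian, Pi.mul_apply, deriv_mul hh hf, deriv_mul hh hg]
  ring

lemma wronskian_comp_comp (hf : DifferentiableAt 𝕜 f (φ x)) (hg : DifferentiableAt 𝕜 g (φ x))
    (hφ : DifferentiableAt 𝕜 φ x) :
    wronskian (f ∘ φ) (g ∘ φ) x = deriv φ x * wronskian f g (φ x) := by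
  simp only [wronskian, Function.comp_apply, deriv_comp x hf hφ, deriv_comp x hg hφ]
  ring

lemma wronskian_congr (hf : f =ᶠ[𝓝 x] f₁) (hg : g =ᶠ[𝓝 x] g₁) :
    wronskian f g x = wronskian f₁ g₁ x := by
  simp only [wronskian, hf.eq_of_nhds, hg.eq_of_nhds, hf.deriv_eq, hg.deriv_eq]

lemma hasDerivAt_div_of_wronskian (hf : DifferentiableAt 𝕜 f x) (hg : DifferentiableAt 𝕜 g x)
    (hf₀ : f x ≠ 0) : HasDerivAt (g / f) (wronskian f g x / f x ^ 2) x := by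
  refine (hg.hasDerivAt.div hf.hasDerivAt hf₀).congr_deriv ?_
  rw [wronskian, mul_comm (f x), mul_comm _ (g x)]

end Wronskian

section Cosecant

/-- The squared cosecant `(π / sin πu)²`, which is the sum of the double poles `1 / (u + m)²` over
all integers `m`. -/
noncomputable def cscSq (u : ℂ) : ℂ := (Real.pi / sin (Real.pi * u)) ^ 2

lemma mem_integerComplement_of_im_ne_zero {u : ℂ} (hu : u.im ≠ 0) : u ∈ ℂ_ℤ := by
  rintro ⟨m, rfl⟩
  exact hu (intCast_im m)

lemma half_mem_integerComplement : (1 / 2 : ℂ) ∈ ℂ_ℤ := by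
  rintro ⟨m, hm⟩
  have h : (2 * m : ℂ) = 1 := by rw [hm]; norm_num
  norm_cast at h
  lia

lemma cscSq_half : cscSq (1 / 2) = Real.pi ^ 2 := by
  rw [cscSq, mul_one_div, sin_pi_div_two, div_one]

lemma cscSq_neg (u : ℂ) : cscSq (-u) = cscSq u := by
  rw [cscSq, mul_neg, Complex.sin_neg, div_neg, neg_sq, cscSq]

lemma differentiableAt_cscSq {u : ℂ} (hu : u ∈ ℂ_ℤ) : DifferentiableAt ℂ cscSq u := by
  unfold cscSq
  fun_prop (disch := exact sin_pi_mul_ne_zero hu)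

lemma deriv_pi_mul_cot_pi_mul {u : ℂ} (hu : u ∈ ℂ_ℤ) :
    deriv (fun v : ℂ ↦ Real.pi * cot (Real.pi * v)) u = -cscSq u := by
  have hs := sin_pi_mul_ne_zero hu
  have hlin : HasDerivAt (fun v : ℂ ↦ Real.pi * v) (Real.pi : ℂ) u := by
    simpa using (hasDerivAt_id u).const_mul (Real.pi : ℂ)
  refine (((hlin.ccos.fun_div hlin.csin hs).const_mul (Real.pi : ℂ)).congr_deriv ?_).deriv
  rw [cscSq]
  field_simp
  linear_combination -sin_sq_add_cos_sq (Real.pi * u)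

lemma abs_im_le_norm_sin (w : ℂ) : |w.im| ≤ ‖sin w‖ := by
  have hnorm : ‖sin w‖ ^ 2 = Real.sin w.re ^ 2 + Real.sinh w.im ^ 2 := by
    rw [← normSq_eq_norm_sq, Complex.sin_eq, ← ofReal_sin, ← ofReal_cos, ← ofReal_cosh,
      ← ofReal_sinh, ← ofReal_mul, ← ofReal_mul, normSq_add_mul_I, mul_pow, mul_pow, Real.cosh_sq,
      Real.cos_sq']
    ring
  have hsinh : |w.im| ≤ |Real.sinh w.im| := by
    rw [Real.abs_sinh]
    exact Real.self_le_sinh_iff.2 (abs_nonneg _)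
  refine hsinh.trans (abs_le_of_sq_le_sq ?_ (norm_nonneg _))
  rw [hnorm]
  exact le_add_of_nonneg_left (sq_nonneg _)

lemma norm_cscSq_le {u : ℂ} (hu : u.im ≠ 0) : ‖cscSq u‖ ≤ (u.im ^ 2)⁻¹ := by
  have hsin := abs_im_le_norm_sin (Real.pi * u)
  rw [im_ofReal_mul, abs_mul, abs_of_pos Real.pi_pos] at hsin
  have hu' := abs_pos.2 hu
  rw [cscSq, norm_pow, norm_div, norm_real, Real.norm_of_nonneg Real.pi_pos.le, ← inv_pow,
    ← sq_abs u.im⁻¹, abs_inv]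
  gcongr
  rw [div_le_iff₀ (hsin.trans_lt' (by positivity)), le_inv_mul_iff₀ hu', mul_comm]
  exact hsin

lemma summable_one_div_add_int_sq (u : ℂ) : Summable fun m : ℤ ↦ 1 / (u + m) ^ 2 := by
  refine (EisensteinSeries.linear_right_summable u 1 le_rfl).congr fun m ↦ ?_
  rw [Int.cast_one, one_mul, zpow_ofNat, one_div]

lemma tsum_one_div_add_int_sq_of_im_pos {u : ℂ} (hu : 0 < u.im) :
    ∑' m : ℤ, 1 / (u + m) ^ 2 = cscSq u := by
  have h := iteratedDerivWithin_cot_pi_mul_eq_mul_tsum_div_pow le_rfl hu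
  rw [iteratedDerivWithin_one, derivWithin_of_isOpen isOpen_upperHalfPlaneSet hu,
    deriv_pi_mul_cot_pi_mul (mem_integerComplement_of_im_ne_zero hu.ne')] at h
  rw [pow_one, Nat.factorial_one, Nat.cast_one, mul_one, neg_one_mul, neg_inj] at h
  exact h.symm

lemma tsum_one_div_neg_add_int_sq (u : ℂ) :
    ∑' m : ℤ, 1 / (-u + m) ^ 2 = ∑' m : ℤ, 1 / (u + m) ^ 2 := by
  rw [← (Equiv.neg ℤ).tsum_eq]
  congr 1 with m
  rw [Equiv.neg_apply, Int.cast_neg, ← neg_add, neg_sq]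

lemma tsum_one_div_add_int_sq_of_im_ne_zero {u : ℂ} (hu : u.im ≠ 0) :
    ∑' m : ℤ, 1 / (u + m) ^ 2 = cscSq u := by
  rcases hu.lt_or_gt with h | h
  · rw [← tsum_one_div_neg_add_int_sq, ← cscSq_neg]
    exact tsum_one_div_add_int_sq_of_im_pos (by simpa using h)
  · exact tsum_one_div_add_int_sq_of_im_pos h

lemma norm_ofReal_le_norm_add_ofReal_mul_I (x y : ℝ) : ‖(x : ℂ)‖ ≤ ‖(x : ℂ) + y * I‖ := by
  simpa using abs_re_le_norm ((x : ℂ) + y * I)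

lemma tsum_one_div_ofReal_add_int_sq {x : ℝ} (hx : (x : ℂ) ∈ ℂ_ℤ) :
    ∑' m : ℤ, 1 / ((x : ℂ) + m) ^ 2 = cscSq x := by
  have hlim : Tendsto (fun y : ℝ ↦ (x : ℂ) + y * I) (𝓝[≠] 0) (𝓝 x) := by
    have : Continuous fun y : ℝ ↦ (x : ℂ) + y * I := by fun_prop
    simpa using (this.tendsto 0).mono_left nhdsWithin_le_nhds
  have hsum : Tendsto (fun y : ℝ ↦ ∑' m : ℤ, 1 / ((x : ℂ) + y * I + m) ^ 2) (𝓝[≠] 0)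
      (𝓝 (∑' m : ℤ, 1 / ((x : ℂ) + m) ^ 2)) := by
    refine tendsto_tsum_of_dominated_convergence (summable_one_div_add_int_sq x).norm
      (fun m ↦ ?_) (.of_forall fun y m ↦ ?_)
    · exact tendsto_const_nhds.div ((hlim.add_const _).pow 2)
        (pow_ne_zero 2 (integerComplement_add_ne_zero hx m))
    · have hxm : 0 < ‖(x : ℂ) + m‖ := norm_pos_iff.2 (integerComplement_add_ne_zero hx m)
      have hre := norm_ofReal_le_norm_add_ofReal_mul_I (x + m) y
      push_cast at hre
      rw [norm_div, norm_div, norm_pow, norm_pow, add_right_comm]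
      gcongr
  refine tendsto_nhds_unique (hsum.congr' ?_)
    ((differentiableAt_cscSq hx).continuousAt.tendsto.comp hlim)
  filter_upwards [self_mem_nhdsWithin] with y hy
  exact tsum_one_div_add_int_sq_of_im_ne_zero (by simpa using hy)

lemma hasSum_one_div_add_int_sq {u : ℂ} (hu : u ∈ ℂ_ℤ) :
    HasSum (fun m : ℤ ↦ 1 / (u + m) ^ 2) (cscSq u) := by
  refine (summable_one_div_add_int_sq u).hasSum_iff.2 ?_
  by_cases him : u.im = 0
  · obtain ⟨x, rfl⟩ : ∃ x : ℝ, (x : ℂ) = u := ⟨u.re, Complex.ext rfl him.symm⟩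
    exact tsum_one_div_ofReal_add_int_sq hu
  · exact tsum_one_div_add_int_sq_of_im_ne_zero him

end Cosecant

section CosecantSeries

/-- The Eisenstein summation `∑ₙ ∑ₘ (x + yτ + m + nτ)⁻²` of the squared reciprocals of a translated
lattice, with the inner sum over `m` evaluated as a squared cosecant. -/
noncomputable def cscSqSeries (x y : ℝ) (τ : ℂ) : ℂ := ∑' n : ℤ, cscSq (x + (y + n) * τ)

lemma im_ofReal_add_ofReal_add_int_mul (x y : ℝ) (n : ℤ) (τ : ℂ) :
    (x + (y + n) * τ : ℂ).im = (y + n) * τ.im := by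
  simp

lemma ofReal_add_mul_mem_integerComplement {x y : ℝ} (hxy : (x : ℂ) ∈ ℂ_ℤ ∨ (y : ℂ) ∈ ℂ_ℤ) (n : ℤ)
    {τ : ℂ} (hτ : 0 < τ.im) : (x + (y + n) * τ : ℂ) ∈ ℂ_ℤ := by
  rcases eq_or_ne (y + n : ℂ) 0 with hy | hy
  · rw [hy, zero_mul, add_zero]
    exact hxy.resolve_right fun h ↦ integerComplement_add_ne_zero h n hy
  · refine mem_integerComplement_of_im_ne_zero ?_
    rw [im_ofReal_add_ofReal_add_int_mul]
    exact mul_ne_zero (by exact_mod_cast hy) hτ.ne'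

/-- A summable majorant for `cscSqSeries x y` on the half-plane `δ < im τ`. -/
noncomputable def cscSqBound (δ x y : ℝ) (n : ℤ) : ℝ :=
  (δ ^ 2)⁻¹ * ((y + n) ^ 2)⁻¹ + if y + n = 0 then ‖cscSq x‖ else 0

lemma summable_ite_add_intCast_eq_zero (y b : ℝ) :
    Summable fun n : ℤ ↦ if y + n = 0 then b else 0 := by
  refine summable_of_hasFiniteSupport (Set.Subsingleton.finite fun m hm n hn ↦ ?_)
  have hm : y + m = 0 := by_contra fun h ↦ hm (if_neg h)
  have hn : y + n = 0 := by_contra fun h ↦ hn (if_neg h)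
  exact_mod_cast add_left_cancel (hm.trans hn.symm)

lemma summable_cscSqBound (δ x y : ℝ) : Summable (cscSqBound δ x y) := by
  refine .add (.mul_left _ ?_) (summable_ite_add_intCast_eq_zero y _)
  refine (summable_one_div_add_int_sq y).norm.congr fun n ↦ ?_
  have h : (1 / (y + n) ^ 2 : ℂ) = ((((y + n) ^ 2)⁻¹ : ℝ) : ℂ) := by push_cast; ring
  rw [h, norm_real, Real.norm_of_nonneg (by positivity)]

lemma norm_cscSq_le_cscSqBound {δ : ℝ} (hδ : 0 < δ) {τ : ℂ} (hτ : δ < τ.im) (x y : ℝ) (n : ℤ) :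
    ‖cscSq (x + (y + n) * τ)‖ ≤ cscSqBound δ x y n := by
  rcases eq_or_ne (y + n) 0 with hy | hy
  · have hy' : (y + n : ℂ) = 0 := by exact_mod_cast hy
    simp [cscSqBound, hy, hy']
  · have him := im_ofReal_add_ofReal_add_int_mul x y n τ
    have hτ₀ := hδ.trans hτ
    refine (norm_cscSq_le (him ▸ mul_ne_zero hy hτ₀.ne')).trans ?_
    rw [him, cscSqBound, if_neg hy, add_zero, mul_pow, mul_inv, mul_comm]
    gcongr

lemma summable_cscSq (x y : ℝ) {τ : ℂ} (hτ : 0 < τ.im) :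
    Summable fun n : ℤ ↦ cscSq (x + (y + n) * τ) :=
  .of_norm_bounded (summable_cscSqBound (τ.im / 2) x y)
    (norm_cscSq_le_cscSqBound (half_pos hτ) (half_lt_self hτ) x y)

lemma differentiableOn_cscSqSeries {x y : ℝ} (hxy : (x : ℂ) ∈ ℂ_ℤ ∨ (y : ℂ) ∈ ℂ_ℤ) :
    DifferentiableOn ℂ (cscSqSeries x y) ℍₒ := by
  intro τ (hτ : 0 < τ.im)
  have hU : IsOpen {σ : ℂ | τ.im / 2 < σ.im} := isOpen_lt continuous_const continuous_im
  have hδ : 0 < τ.im / 2 := half_pos hτ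
  refine ((differentiableOn_tsum_of_summable_norm (summable_cscSqBound (τ.im / 2) x y)
    (fun n σ hσ ↦ ?_) hU fun n σ hσ ↦ norm_cscSq_le_cscSqBound hδ hσ x y n).differentiableAt
      (hU.mem_nhds (half_lt_self hτ))).differentiableWithinAt
  have hcsc := differentiableAt_cscSq (ofReal_add_mul_mem_integerComplement hxy n (hδ.trans hσ))
  exact (hcsc.comp (f := fun σ : ℂ ↦ x + (y + n) * σ) σ (by fun_prop)).differentiableWithinAt

lemma tendsto_cscSq_add_mul (x y : ℝ) :
    Tendsto (fun τ : ℂ ↦ cscSq (x + y * τ)) I∞ (𝓝 (if y = 0 then cscSq x else 0)) := by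
  rcases eq_or_ne y 0 with rfl | hy
  · simp
  · have him (τ : ℂ) : (x + y * τ : ℂ).im = y * τ.im := by simp
    have hlim : Tendsto (fun τ : ℂ ↦ ((y * τ.im) ^ 2)⁻¹) I∞ (𝓝 0) := by
      have h : Tendsto (fun t : ℝ ↦ (y ^ 2 * t ^ 2)⁻¹) atTop (𝓝 0) :=
        ((tendsto_pow_atTop two_ne_zero).const_mul_atTop (by positivity)).inv_tendsto_atTop
      simpa only [mul_pow, Function.comp_def] using h.comp tendsto_comap
    rw [if_neg hy]
    refine squeeze_zero_norm' ?_ hlim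
    filter_upwards [eventually_mem_upperHalfPlaneSet] with τ hτ
    rw [← him]
    exact norm_cscSq_le (him τ ▸ mul_ne_zero hy (ne_of_gt hτ))

lemma tendsto_cscSqSeries (x y : ℝ) :
    Tendsto (cscSqSeries x y) I∞ (𝓝 (∑' n : ℤ, if y + n = 0 then cscSq x else 0)) := by
  refine tendsto_tsum_of_dominated_convergence (summable_cscSqBound 1 x y) (fun n ↦ ?_) ?_
  · simpa only [ofReal_add, ofReal_intCast] using tendsto_cscSq_add_mul x (y + n)
  · filter_upwards [tendsto_comap.eventually (eventually_gt_atTop 1)] with τ hτ n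
    exact norm_cscSq_le_cscSqBound one_pos hτ x y n

lemma tendsto_cscSqSeries_zero (x : ℝ) : Tendsto (cscSqSeries x 0) I∞ (𝓝 (cscSq x)) := by
  simpa [tsum_ite_eq] using tendsto_cscSqSeries x 0

lemma tendsto_cscSqSeries_of_mem_integerComplement (x : ℝ) {y : ℝ} (hy : (y : ℂ) ∈ ℂ_ℤ) :
    Tendsto (cscSqSeries x y) I∞ (𝓝 0) := by
  have h (n : ℤ) : y + n ≠ 0 := by exact_mod_cast integerComplement_add_ne_zero hy n
  simpa [h] using tendsto_cscSqSeries x y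

end CosecantSeries

section WeierstrassP

/-- The period pair `(1, τ)` of the lattice `ℤ + τℤ`. -/
noncomputable def periodPairOfIm {τ : ℂ} (hτ : 0 < τ.im) : PeriodPair where
  ω₁ := 1
  ω₂ := τ
  indep := by
    refine LinearIndependent.pair_iff.2 fun s t h ↦ ?_
    have ht : t = 0 := by simpa [hτ.ne'] using congrArg im h
    exact ⟨by simpa [ht] using congrArg re h, ht⟩

lemma periodPairOfIm_latticeEquivProd_symm {τ : ℂ} (hτ : 0 < τ.im) (w : ℤ × ℤ) :
    ((periodPairOfIm hτ).latticeEquivProd.symm w : ℂ) = w.1 + w.2 * τ := by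
  rw [PeriodPair.latticeEquiv_symm_apply]
  simp [periodPairOfIm]

lemma wp_eq_weierstrassP_s15 {τ : ℂ} (hτ : 0 < τ.im) (z : ℂ) :
    wp τ z = (periodPairOfIm hτ).weierstrassP z := by
  set L := periodPairOfIm hτ
  have hsum := (L.latticeEquivProd.symm.toEquiv.hasSum_iff).2 (L.hasSum_weierstrassP z)
  have hsplit := hsum.summable.tsum_subtype_add_tsum_subtype_compl {(0 : ℤ × ℤ)}
  rw [hsum.tsum_eq, tsum_singleton] at hsplit
  rw [← hsplit, wp]
  congr 1
  · simp
  · refine tsum_congr fun w ↦ ?_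
    simp [L, periodPairOfIm_latticeEquivProd_symm]

lemma hasSum_wp_sub_wp {τ : ℂ} (hτ : 0 < τ.im) (z z' : ℂ) :
    HasSum (fun w : ℤ × ℤ ↦ 1 / (z + (w.1 + w.2 * τ)) ^ 2 - 1 / (z' + (w.1 + w.2 * τ)) ^ 2)
      (wp τ z - wp τ z') := by
  rw [wp_eq_weierstrassP_s15 hτ, wp_eq_weierstrassP_s15 hτ]
  set L := periodPairOfIm hτ
  have h := (L.latticeEquivProd.symm.toEquiv.hasSum_iff).2
    ((L.hasSum_weierstrassP z).sub (L.hasSum_weierstrassP z'))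
  refine ((Equiv.neg (ℤ × ℤ)).hasSum_iff.2 h).congr_fun fun w ↦ ?_
  have hneg : (L.latticeEquivProd.symm (-w) : ℂ) = -(w.1 + w.2 * τ) := by
    simp only [map_neg, Submodule.coe_neg, L, periodPairOfIm_latticeEquivProd_symm]
  change _ = 1 / (z - (L.latticeEquivProd.symm (-w) : ℂ)) ^ 2 - _ -
    (1 / (z' - (L.latticeEquivProd.symm (-w) : ℂ)) ^ 2 - _)
  rw [sub_sub_sub_cancel_right, hneg, sub_neg_eq_add, sub_neg_eq_add]

lemma wp_add_int_add_int_mul {τ : ℂ} (hτ : 0 < τ.im) (z : ℂ) (m n : ℤ) :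
    wp τ (z + (m + n * τ)) = wp τ z := by
  rw [wp_eq_weierstrassP_s15 hτ, wp_eq_weierstrassP_s15 hτ,
    ← periodPairOfIm_latticeEquivProd_symm hτ (m, n)]
  exact PeriodPair.weierstrassP_add_coe ..

lemma wp_neg {τ : ℂ} (hτ : 0 < τ.im) (z : ℂ) : wp τ (-z) = wp τ z := by
  rw [wp_eq_weierstrassP_s15 hτ, wp_eq_weierstrassP_s15 hτ, PeriodPair.weierstrassP_neg]

lemma wp_moebius {a b c d : ℤ} (hdet : a * d - b * c = 1) {τ : ℂ} (hden : (c * τ + d : ℂ) ≠ 0)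
    (z : ℂ) : wp ((a * τ + b) / (c * τ + d)) z = (c * τ + d) ^ 2 * wp τ ((c * τ + d) * z) := by
  let e : ℤ × ℤ ≃ ℤ × ℤ :=
    { toFun := fun w ↦ (w.1 * d + w.2 * b, w.1 * c + w.2 * a)
      invFun := fun w ↦ (a * w.1 - b * w.2, d * w.2 - c * w.1)
      left_inv := fun w ↦
        Prod.ext (by linear_combination w.1 * hdet) (by linear_combination w.2 * hdet)
      right_inv := fun w ↦
        Prod.ext (by linear_combination w.1 * hdet) (by linear_combination w.2 * hdet) }
  let e₀ : {w : ℤ × ℤ // w ≠ 0} ≃ {w : ℤ × ℤ // w ≠ 0} :=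
    e.subtypeEquiv fun w ↦ (e.injective.ne_iff' (by simp [e])).symm
  have hscale (u : ℂ) : u⁻¹ ^ 2 = (c * τ + d) ^ 2 * ((c * τ + d) * u)⁻¹ ^ 2 := by
    field_simp
  have hlattice (w : ℤ × ℤ) : (c * τ + d) * (w.1 + w.2 * ((a * τ + b) / (c * τ + d)) : ℂ) =
      (e w).1 + (e w).2 * τ := by
    simp only [e, Equiv.coe_fn_mk]
    push_cast
    field_simp
    ring
  rw [wp, wp, mul_add, ← tsum_mul_left, ← e₀.tsum_eq fun w : {w : ℤ × ℤ // w ≠ 0} ↦ _ * _,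
    ← hscale]
  congr 1
  refine tsum_congr fun w ↦ ?_
  rw [hscale (z - _), hscale (_ + _), mul_sub (c * τ + d : ℂ), hlattice, ← mul_sub]
  rfl

lemma wp_add_one (τ z : ℂ) : wp (τ + 1) z = wp τ z := by
  simpa using wp_moebius (a := 1) (b := 1) (c := 0) (d := 1) (by simp) (τ := τ) (by simp) z

lemma wp_neg_one_div {τ : ℂ} (hτ : τ ≠ 0) (z : ℂ) : wp (-1 / τ) z = τ ^ 2 * wp τ (τ * z) := by
  simpa using wp_moebius (a := 0) (b := -1) (c := 1) (d := 0) (by simp) (τ := τ) (by simpa) z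

lemma wp_sub_wp_eq_cscSqSeries {x y x' y' : ℝ} (h : (x : ℂ) ∈ ℂ_ℤ ∨ (y : ℂ) ∈ ℂ_ℤ)
    (h' : (x' : ℂ) ∈ ℂ_ℤ ∨ (y' : ℂ) ∈ ℂ_ℤ) {τ : ℂ} (hτ : 0 < τ.im) :
    wp τ (x + y * τ) - wp τ (x' + y' * τ) = cscSqSeries x y τ - cscSqSeries x' y' τ := by
  have hsum := (Equiv.prodComm ℤ ℤ).hasSum_iff.2 (hasSum_wp_sub_wp hτ (x + y * τ) (x' + y' * τ))
  have hrow (n : ℤ) := (hasSum_one_div_add_int_sq (ofReal_add_mul_mem_integerComplement h n hτ)).sub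
    (hasSum_one_div_add_int_sq (ofReal_add_mul_mem_integerComplement h' n hτ))
  rw [cscSqSeries, cscSqSeries, ← (summable_cscSq x y hτ).tsum_sub (summable_cscSq x' y' hτ)]
  refine (hsum.prod_fiberwise fun n ↦ (hrow n).congr_fun fun m ↦ ?_).tsum_eq.symm
  simp only [Function.comp_apply, Equiv.prodComm_apply, Prod.swap_prod_mk]
  congr 3 <;> ring

end WeierstrassP

section QExpansion

open Function.Periodic

lemma exists_analyticAt_comp_qParam {h : ℝ} (hh : 0 < h) {f : ℂ → ℂ} {l : ℂ}
    (hf : DifferentiableOn ℂ f ℍₒ) (hper : ∀ τ ∈ ℍₒ, f (τ + h) = f τ)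
    (hl : Tendsto f I∞ (𝓝 l)) :
    ∃ F : ℂ → ℂ, AnalyticAt ℂ F 0 ∧ F 0 = l ∧ ∀ τ ∈ ℍₒ, F (qParam h τ) = f τ := by
  set g : ℂ → ℂ := Set.indicator ℍₒ f
  have hgf : Set.EqOn g f ℍₒ := Set.eqOn_indicator
  have hmem (τ : ℂ) : τ + h ∈ ℍₒ ↔ τ ∈ ℍₒ := by simp [upperHalfPlaneSet]
  have hgper : Function.Periodic g h := by
    intro τ
    by_cases hτ : τ ∈ ℍₒ
    · rw [hgf hτ, hgf ((hmem τ).2 hτ), hper τ hτ]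
    · simp only [g, Set.indicator_of_notMem hτ, Set.indicator_of_notMem (mt (hmem τ).1 hτ)]
  have hgl : Tendsto g I∞ (𝓝 l) :=
    hl.congr' (eventually_mem_upperHalfPlaneSet.mono fun τ hτ ↦ (hgf hτ).symm)
  have hgd : ∀ᶠ τ in I∞, DifferentiableAt ℂ g τ :=
    eventually_mem_upperHalfPlaneSet.mono fun τ hτ ↦
      (hf.congr hgf).differentiableAt (isOpen_upperHalfPlaneSet.mem_nhds hτ)
  have hgb : BoundedAtFilter I∞ g := hgl.isBigO_one ℝ
  refine ⟨cuspFunction h g, ?_, tendsto_nhds_unique (tendsto_at_I_inf hh hgper hgd hgb) hgl,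
    fun τ hτ ↦ (eq_cuspFunction hh.ne' hgper τ).trans (hgf hτ)⟩
  rw [Complex.analyticAt_iff_eventually_differentiableAt, ← nhdsNE_sup_pure, eventually_sup]
  exact ⟨eventually_differentiableAt_cuspFunction_nhds_ne_zero hh hgper hgd,
    differentiableAt_cuspFunction_zero hh hgper hgd hgb⟩

lemma hasDerivAt_qParam (h : ℝ) (τ : ℂ) :
    HasDerivAt (qParam h) (qParam h τ * (2 * Real.pi * I / h)) τ :=
  (((hasDerivAt_const_mul (2 * Real.pi * I)).div_const (h : ℂ)).cexp)

lemma exists_tendsto_div_qParam {h : ℝ} (hh : 0 < h) {f : ℂ → ℂ} {l : ℂ}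
    (hf : DifferentiableOn ℂ f ℍₒ) (hper : ∀ τ ∈ ℍₒ, f (τ + h) = f τ)
    (hl : Tendsto f I∞ (𝓝 l)) :
    ∃ d : ℂ, Tendsto (fun τ ↦ (f τ - l) / qParam h τ) I∞ (𝓝 d) ∧
      Tendsto (fun τ ↦ deriv f τ / qParam h τ) I∞ (𝓝 (2 * Real.pi * I / h * d)) := by
  obtain ⟨F, hF, rfl, hFf⟩ := exists_analyticAt_comp_qParam hh hf hper hl
  have hq : Tendsto (qParam h) I∞ (𝓝[≠] 0) := qParam_tendsto hh
  have hq₀ : Tendsto (qParam h) I∞ (𝓝 0) := hq.mono_right nhdsWithin_le_nhds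
  refine ⟨deriv F 0, ?_, ?_⟩
  · refine (hF.differentiableAt.hasDerivAt.tendsto_slope.comp hq).congr' ?_
    filter_upwards [eventually_mem_upperHalfPlaneSet] with τ hτ
    rw [Function.comp_apply, slope_def_field, hFf τ hτ, sub_zero]
  · refine ((hF.deriv.continuousAt.tendsto.comp hq₀).const_mul _).congr' ?_
    filter_upwards [eventually_mem_upperHalfPlaneSet, hq₀.eventually hF.eventually_analyticAt]
      with τ hτ hFτ
    have hfF : f =ᶠ[𝓝 τ] F ∘ qParam h := by
      filter_upwards [isOpen_upperHalfPlaneSet.mem_nhds hτ] with σ hσ using (hFf σ hσ).symm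
    rw [hfF.deriv_eq, (hFτ.differentiableAt.hasDerivAt.comp τ (hasDerivAt_qParam h τ)).deriv,
      mul_left_comm, mul_div_cancel_left₀ _ (qParam_ne_zero τ), mul_comm, Function.comp_apply]

lemma tendsto_zero_of_tendsto_div_qParam {h : ℝ} (hh : 0 < h) {f : ℂ → ℂ} {d : ℂ}
    (hf : Tendsto (fun τ ↦ f τ / qParam h τ) I∞ (𝓝 d)) : Tendsto f I∞ (𝓝 0) := by
  have hq : Tendsto (qParam h) I∞ (𝓝 0) := (qParam_tendsto hh).mono_right nhdsWithin_le_nhds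
  simpa [div_mul_cancel₀ _ (qParam_ne_zero _)] using hf.mul hq

lemma qParam_two_sq (τ : ℂ) : qParam 2 τ ^ 2 = qParam 1 τ := by
  rw [qParam, qParam, ← exp_nat_mul]
  congr 1
  push_cast
  ring

end QExpansion

section LevelOne

open UpperHalfPlane hiding I
open ModularForm MatrixGroups

variable {f g : ℂ → ℂ}

lemma slash_S_eq_self {k : ℤ} (hS : ∀ τ ∈ ℍₒ, f (-1 / τ) = τ ^ k * f τ) :
    ((fun z : ℍ ↦ f z) ∣[k] ModularGroup.S) = fun z : ℍ ↦ f z := by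
  ext z
  have hden : denom ModularGroup.S z = z := by
    rw [ModularGroup.denom_apply]
    simp [ModularGroup.S]
  have hz : (-(z : ℂ))⁻¹ = -1 / z := by rw [neg_div, one_div, inv_neg]
  rw [SL_slash_apply, modular_S_smul, hden, coe_mk, hz, hS z z.im_pos, mul_right_comm,
    zpow_neg, mul_inv_cancel₀ (zpow_ne_zero k z.ne_zero), one_mul]

lemma slash_T_eq_self (k : ℤ) (hT : ∀ τ ∈ ℍₒ, f (τ + 1) = f τ) :
    ((fun z : ℍ ↦ f z) ∣[k] ModularGroup.T) = fun z : ℍ ↦ f z := by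
  ext z
  have hden : denom ModularGroup.T z = 1 := by
    rw [ModularGroup.denom_apply]
    simp [ModularGroup.T]
  rw [SL_slash_apply, modular_T_smul, hden, one_zpow, mul_one, coe_vadd, add_comm, ofReal_one,
    hT z z.im_pos]

lemma exists_eq_const_mul_discriminant (hf : DifferentiableOn ℂ f ℍₒ)
    (hT : ∀ τ ∈ ℍₒ, f (τ + 1) = f τ) (hS : ∀ τ ∈ ℍₒ, f (-1 / τ) = τ ^ 12 * f τ)
    (hf₀ : Tendsto f I∞ (𝓝 0)) : ∃ c : ℂ, ∀ τ : ℍ, f τ = c * discriminant τ := by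
  have hslash (A : SL(2, ℤ)) : ((fun z : ℍ ↦ f z) ∣[(12 : ℤ)] A) = fun z : ℍ ↦ f z :=
    SlashInvariantForm.slash_action_generators_SL2Z (slash_S_eq_self hS) (slash_T_eq_self 12 hT) A
  let F : CuspForm 𝒮ℒ 12 :=
    { toFun := fun z : ℍ ↦ f z
      slash_action_eq' := by
        rintro _ ⟨A, rfl⟩
        exact hslash A
      holo' := mdifferentiable_iff.2 <| hf.congr fun z hz ↦ by
        exact congrArg f (congrArg UpperHalfPlane.coe (ofComplex_apply_of_im_pos hz))
      zero_at_cusps' := by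
        intro c hc
        rw [Subgroup.IsArithmetic.isCusp_iff_isCusp_SL2Z] at hc
        rw [OnePoint.isZeroAt_iff_forall_SL2Z hc]
        intro γ _
        rw [hslash]
        exact hf₀.comp tendsto_coe_atImInfty }
  obtain ⟨c, hc⟩ := CuspForm.exists_smul_discriminant_of_weight_eq_twelve F
  exact ⟨c, fun τ ↦ (DFunLike.congr_fun hc τ).symm⟩

/-- Holomorphic functions on `ℍ` that transform in weight `k` under `SL(2, ℤ)` up to the quadratic
character, which takes the value `-1` on both generators `τ ↦ τ + 1` and `τ ↦ -1 / τ`. No growth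
condition at the cusp is imposed. -/
structure IsSignModular (k : ℕ) (f : ℂ → ℂ) : Prop where
  differentiableOn : DifferentiableOn ℂ f ℍₒ
  map_add_one : ∀ τ ∈ ℍₒ, f (τ + 1) = -f τ
  map_neg_one_div : ∀ τ ∈ ℍₒ, f (-1 / τ) = -(τ ^ k * f τ)

namespace IsSignModular

lemma add {k : ℕ} (hf : IsSignModular k f) (hg : IsSignModular k g) :
    IsSignModular k (f + g) where
  differentiableOn := hf.differentiableOn.add hg.differentiableOn
  map_add_one τ hτ := by
    simp only [Pi.add_apply, hf.map_add_one τ hτ, hg.map_add_one τ hτ, neg_add]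
  map_neg_one_div τ hτ := by
    simp only [Pi.add_apply, hf.map_neg_one_div τ hτ, hg.map_neg_one_div τ hτ, neg_add, mul_add]

lemma const_smul {k : ℕ} (hf : IsSignModular k f) (a : ℂ) : IsSignModular k (a • f) where
  differentiableOn := hf.differentiableOn.const_smul a
  map_add_one τ hτ := by
    simp only [Pi.smul_apply, hf.map_add_one τ hτ, smul_neg]
  map_neg_one_div τ hτ := by
    simp only [Pi.smul_apply, hf.map_neg_one_div τ hτ, smul_neg, mul_smul_comm]

lemma exists_sq_eq_const_mul_discriminant (hf : IsSignModular 6 f) (hf₀ : Tendsto f I∞ (𝓝 0)) :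
    ∃ c : ℂ, ∀ τ : ℍ, f τ ^ 2 = c * discriminant τ := by
  refine exists_eq_const_mul_discriminant (f := fun τ ↦ f τ ^ 2) (hf.differentiableOn.pow 2)
    (fun τ hτ ↦ ?_) (fun τ hτ ↦ ?_) (by simpa using hf₀.pow 2)
  · rw [hf.map_add_one τ hτ, neg_sq]
  · rw [hf.map_neg_one_div τ hτ, neg_sq, mul_pow, ← pow_mul]

lemma ne_zero (hf : IsSignModular 6 f) (hf₀ : Tendsto f I∞ (𝓝 0)) (hne : ∃ σ ∈ ℍₒ, f σ ≠ 0) :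
    ∀ τ ∈ ℍₒ, f τ ≠ 0 := by
  obtain ⟨c, hc⟩ := hf.exists_sq_eq_const_mul_discriminant hf₀
  obtain ⟨σ, hσ, hfσ⟩ := hne
  have hc₀ : c ≠ 0 := left_ne_zero_of_mul ((hc ⟨σ, hσ⟩).symm.trans_ne (pow_ne_zero 2 hfσ))
  intro τ hτ hfτ
  exact pow_ne_zero_iff two_ne_zero |>.1
    ((hc ⟨τ, hτ⟩).trans_ne (mul_ne_zero hc₀ (discriminant_ne_zero _))) hfτ

lemma eqOn_zero_of_tendsto_div_qParam (hf : IsSignModular 6 f)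
    (hlim : Tendsto (fun τ ↦ f τ / Function.Periodic.qParam 2 τ) I∞ (𝓝 0)) :
    Set.EqOn f 0 ℍₒ := by
  obtain ⟨c, hc⟩ :=
    hf.exists_sq_eq_const_mul_discriminant (tendsto_zero_of_tendsto_div_qParam two_pos hlim)
  -- As `Δ = q ∏ (1 - qⁿ)²⁴` with `q` the square of `qParam 2`, the constant `c` in `f² = cΔ` is
  -- the limit of `(f / qParam 2)²` at the cusp.
  have hsq : Tendsto (fun τ : ℍ ↦ (f τ / Function.Periodic.qParam 2 τ) ^ 2) atImInfty (𝓝 0) := by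
    simpa using (hlim.comp tendsto_coe_atImInfty).pow 2
  have hprod := tendsto_atImInfty_tprod_one_sub_eta_q_pow.const_mul c
  have hc₀ : c = 0 := by
    rw [← mul_one c]
    refine tendsto_nhds_unique (hprod.congr fun τ ↦ ?_) hsq
    rw [div_pow, hc, discriminant_eq_q_prod, qParam_two_sq, mul_left_comm,
      mul_div_cancel_left₀ _ (Function.Periodic.qParam_ne_zero _)]
  intro τ hτ
  simpa [hc₀] using hc ⟨τ, hτ⟩

end IsSignModular

end LevelOne

section HalfPeriods

variable {τ : ℂ}

lemma ne_zero_of_mem_upperHalfPlaneSet (hτ : τ ∈ ℍₒ) : τ ≠ 0 := UpperHalfPlane.ne_zero ⟨τ, hτ⟩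

lemma neg_one_div_mem_upperHalfPlaneSet (hτ : τ ∈ ℍₒ) : -1 / τ ∈ ℍₒ := by
  rw [neg_div, one_div, ← inv_neg]
  exact UpperHalfPlane.im_inv_neg_coe_pos ⟨τ, hτ⟩

lemma e1_add_one (τ : ℂ) : e1 (τ + 1) = e1 τ := wp_add_one τ _

lemma e2_add_one (τ : ℂ) : e2 (τ + 1) = e3 τ := by
  rw [e2, e3, wp_add_one, add_comm]

lemma e3_add_one (hτ : τ ∈ ℍₒ) : e3 (τ + 1) = e2 τ := by
  rw [e3, e2, wp_add_one, ← wp_add_int_add_int_mul hτ (τ / 2) 1 0]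
  congr 1
  push_cast
  ring

lemma e1_neg_one_div (hτ : τ ∈ ℍₒ) : e1 (-1 / τ) = τ ^ 2 * e2 τ := by
  rw [e1, e2, wp_neg_one_div (ne_zero_of_mem_upperHalfPlaneSet hτ), mul_one_div]

lemma e2_neg_one_div (hτ : τ ∈ ℍₒ) : e2 (-1 / τ) = τ ^ 2 * e1 τ := by
  have hτ₀ := ne_zero_of_mem_upperHalfPlaneSet hτ
  have harg : τ * (-1 / τ / 2) = -(1 / 2) := by field_simp
  rw [e2, e1, wp_neg_one_div hτ₀, harg, wp_neg hτ]

lemma e3_neg_one_div (hτ : τ ∈ ℍₒ) : e3 (-1 / τ) = τ ^ 2 * e3 τ := by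
  have hτ₀ := ne_zero_of_mem_upperHalfPlaneSet hτ
  have harg : τ * ((1 + -1 / τ) / 2) = (1 + τ) / 2 + ((-1 : ℤ) + (0 : ℤ) * τ) := by
    field_simp
    push_cast
    ring
  rw [e3, e3, wp_neg_one_div hτ₀, harg, wp_add_int_add_int_mul hτ]

/-- The difference `e₂ - e₁`, the denominator of the modular function `t`. -/
noncomputable def e21 : ℂ → ℂ := e2 - e1

/-- The difference `e₃ - e₁`, the numerator of the modular function `t`. -/
noncomputable def e31 : ℂ → ℂ := e3 - e1

lemma e21_add_one (τ : ℂ) : e21 (τ + 1) = e31 τ := by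
  simp only [e21, e31, Pi.sub_apply, e2_add_one, e1_add_one]

lemma e31_add_one (hτ : τ ∈ ℍₒ) : e31 (τ + 1) = e21 τ := by
  simp only [e21, e31, Pi.sub_apply, e3_add_one hτ, e1_add_one]

lemma add_one_mem_upperHalfPlaneSet (hτ : τ ∈ ℍₒ) : τ + 1 ∈ ℍₒ := by
  simpa [upperHalfPlaneSet] using hτ

lemma e21_add_two (hτ : τ ∈ ℍₒ) : e21 (τ + 2) = e21 τ := by
  rw [← one_add_one_eq_two, ← add_assoc, e21_add_one, e31_add_one hτ]

lemma e31_add_two (hτ : τ ∈ ℍₒ) : e31 (τ + 2) = e31 τ := by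
  rw [← one_add_one_eq_two, ← add_assoc, e31_add_one (add_one_mem_upperHalfPlaneSet hτ),
    e21_add_one]

lemma e21_neg_one_div (hτ : τ ∈ ℍₒ) : e21 (-1 / τ) = -(τ ^ 2 * e21 τ) := by
  simp only [e21, Pi.sub_apply, e2_neg_one_div hτ, e1_neg_one_div hτ]
  ring

lemma e31_neg_one_div (hτ : τ ∈ ℍₒ) : e31 (-1 / τ) = τ ^ 2 * (e31 τ - e21 τ) := by
  simp only [e21, e31, Pi.sub_apply, e3_neg_one_div hτ, e1_neg_one_div hτ]
  ring

lemma e21_eqOn : Set.EqOn e21 (cscSqSeries 0 (1 / 2) - cscSqSeries (1 / 2) 0) ℍₒ := by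
  intro τ hτ
  have h := wp_sub_wp_eq_cscSqSeries (x := 0) (y := 1 / 2) (x' := 1 / 2) (y' := 0)
    (.inr (by simpa using half_mem_integerComplement))
    (.inl (by simpa using half_mem_integerComplement)) hτ
  rw [Pi.sub_apply, ← h, e21, Pi.sub_apply, e2, e1]
  congr 2 <;> push_cast <;> ring

lemma e31_eqOn : Set.EqOn e31 (cscSqSeries (1 / 2) (1 / 2) - cscSqSeries (1 / 2) 0) ℍₒ := by
  intro τ hτ
  have h := wp_sub_wp_eq_cscSqSeries (x := 1 / 2) (y := 1 / 2) (x' := 1 / 2) (y' := 0)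
    (.inl (by simpa using half_mem_integerComplement))
    (.inl (by simpa using half_mem_integerComplement)) hτ
  rw [Pi.sub_apply, ← h, e31, Pi.sub_apply, e3, e1]
  congr 2 <;> push_cast <;> ring

lemma differentiableOn_e21 : DifferentiableOn ℂ e21 ℍₒ :=
  ((differentiableOn_cscSqSeries (.inr (by simpa using half_mem_integerComplement))).sub
    (differentiableOn_cscSqSeries (.inl (by simpa using half_mem_integerComplement)))).congr
      e21_eqOn

lemma differentiableOn_e31 : DifferentiableOn ℂ e31 ℍₒ :=
  ((differentiableOn_cscSqSeries (.inr (by simpa using half_mem_integerComplement))).sub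
    (differentiableOn_cscSqSeries (.inl (by simpa using half_mem_integerComplement)))).congr
      e31_eqOn

lemma differentiableAt_e21 (hτ : τ ∈ ℍₒ) : DifferentiableAt ℂ e21 τ :=
  differentiableOn_e21.differentiableAt (isOpen_upperHalfPlaneSet.mem_nhds hτ)

lemma differentiableAt_e31 (hτ : τ ∈ ℍₒ) : DifferentiableAt ℂ e31 τ :=
  differentiableOn_e31.differentiableAt (isOpen_upperHalfPlaneSet.mem_nhds hτ)

lemma tendsto_cscSqSeries_half_sub (x : ℝ) :
    Tendsto (cscSqSeries x (1 / 2) - cscSqSeries (1 / 2) 0) I∞ (𝓝 (-Real.pi ^ 2)) := by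
  have h := (tendsto_cscSqSeries_of_mem_integerComplement x (y := 1 / 2)
    (by simpa using half_mem_integerComplement)).sub (tendsto_cscSqSeries_zero (1 / 2))
  have hval : (0 - cscSq (1 / 2 : ℝ) : ℂ) = -Real.pi ^ 2 := by
    rw [zero_sub, ofReal_div, ofReal_one, ofReal_ofNat, cscSq_half]
  rwa [hval] at h

lemma tendsto_e21 : Tendsto e21 I∞ (𝓝 (-Real.pi ^ 2)) :=
  (tendsto_cscSqSeries_half_sub 0).congr' <|
    eventually_mem_upperHalfPlaneSet.mono fun _ hτ ↦ (e21_eqOn hτ).symm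

lemma tendsto_e31 : Tendsto e31 I∞ (𝓝 (-Real.pi ^ 2)) :=
  (tendsto_cscSqSeries_half_sub (1 / 2)).congr' <|
    eventually_mem_upperHalfPlaneSet.mono fun _ hτ ↦ (e31_eqOn hτ).symm

end HalfPeriods

section RootDifferences

/-- The product `(e₂ - e₁)(e₃ - e₁)(e₃ - e₂)`, the square root of the discriminant of the cubic
with roots `e₁, e₂, e₃` up to sign. -/
noncomputable def diffProd : ℂ → ℂ := e21 * e31 * (e31 - e21)

lemma isSignModular_diffProd : IsSignModular 6 diffProd where
  differentiableOn := (differentiableOn_e21.mul differentiableOn_e31).mul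
    (differentiableOn_e31.sub differentiableOn_e21)
  map_add_one τ hτ := by
    simp only [diffProd, Pi.mul_apply, Pi.sub_apply, e21_add_one, e31_add_one hτ]
    ring
  map_neg_one_div τ hτ := by
    simp only [diffProd, Pi.mul_apply, Pi.sub_apply, e21_neg_one_div hτ, e31_neg_one_div hτ]
    ring

lemma hasDerivAt_neg_one_div {τ : ℂ} (hτ : τ ≠ 0) :
    HasDerivAt (fun σ : ℂ ↦ -1 / σ) (1 / τ ^ 2) τ := by
  simpa [neg_div, one_div, Pi.neg_def] using (hasDerivAt_inv hτ).neg

lemma differentiableOn_wronskian_e21_e31 : DifferentiableOn ℂ (wronskian e21 e31) ℍₒ :=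
  (differentiableOn_e21.mul (differentiableOn_e31.deriv isOpen_upperHalfPlaneSet)).sub
    ((differentiableOn_e21.deriv isOpen_upperHalfPlaneSet).mul differentiableOn_e31)

lemma wronskian_e21_e31_add_one {τ : ℂ} (hτ : τ ∈ ℍₒ) :
    wronskian e21 e31 (τ + 1) = -wronskian e21 e31 τ := by
  have hτ₁ := add_one_mem_upperHalfPlaneSet hτ
  have hcomp := wronskian_comp_comp (φ := (· + 1)) (differentiableAt_e21 hτ₁)
    (differentiableAt_e31 hτ₁) (differentiableAt_id.add_const 1)
  have h31 : e31 ∘ (· + 1) =ᶠ[𝓝 τ] e21 := by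
    filter_upwards [isOpen_upperHalfPlaneSet.mem_nhds hτ] with σ hσ using e31_add_one hσ
  have h21 : e21 ∘ (· + 1) = e31 := funext e21_add_one
  rw [wronskian_congr (.of_eq h21) h31, wronskian_swap] at hcomp
  simpa using hcomp.symm

lemma wronskian_e21_e31_neg_one_div {τ : ℂ} (hτ : τ ∈ ℍₒ) :
    wronskian e21 e31 (-1 / τ) = -(τ ^ 6 * wronskian e21 e31 τ) := by
  have hτ₀ := ne_zero_of_mem_upperHalfPlaneSet hτ
  have hτ' := neg_one_div_mem_upperHalfPlaneSet hτ
  have hφ := hasDerivAt_neg_one_div hτ₀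
  have h21 := differentiableAt_e21 hτ
  have h31 := differentiableAt_e31 hτ
  have hsq : DifferentiableAt ℂ (fun σ : ℂ ↦ σ ^ 2) τ := by fun_prop
  have hcomp := wronskian_comp_comp (differentiableAt_e21 hτ') (differentiableAt_e31 hτ')
    hφ.differentiableAt
  have h21S : e21 ∘ (fun σ ↦ -1 / σ) =ᶠ[𝓝 τ] -((fun σ ↦ σ ^ 2) * e21) := by
    filter_upwards [isOpen_upperHalfPlaneSet.mem_nhds hτ] with σ hσ using e21_neg_one_div hσ
  have h31S : e31 ∘ (fun σ ↦ -1 / σ) =ᶠ[𝓝 τ] (fun σ ↦ σ ^ 2) * (e31 - e21) := by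
    filter_upwards [isOpen_upperHalfPlaneSet.mem_nhds hτ] with σ hσ using e31_neg_one_div hσ
  rw [wronskian_congr h21S h31S, wronskian_neg_left, wronskian_mul_mul hsq h21 (h31.sub h21),
    wronskian_sub_left_right h21 h31, hφ.deriv] at hcomp
  rw [one_div_mul_eq_div, eq_div_iff (pow_ne_zero 2 hτ₀)] at hcomp
  rw [← hcomp]
  ring

lemma isSignModular_wronskian_e21_e31 : IsSignModular 6 (wronskian e21 e31) where
  differentiableOn := differentiableOn_wronskian_e21_e31
  map_add_one _ := wronskian_e21_e31_add_one
  map_neg_one_div _ := wronskian_e21_e31_neg_one_div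

lemma tendsto_e31_sub_e21 : Tendsto (e31 - e21) I∞ (𝓝 0) := by
  have h := tendsto_e31.sub tendsto_e21
  rwa [sub_self] at h

lemma tendsto_diffProd : Tendsto diffProd I∞ (𝓝 0) := by
  have h := (tendsto_e21.mul tendsto_e31).mul tendsto_e31_sub_e21
  rwa [mul_zero] at h

open Function.Periodic in
lemma tendsto_wronskian_add_diffProd_div_qParam :
    Tendsto (fun τ ↦ (wronskian e21 e31 + (I / Real.pi) • diffProd) τ / qParam 2 τ) I∞
      (𝓝 0) := by
  obtain ⟨d₁, -, h21⟩ := exists_tendsto_div_qParam two_pos differentiableOn_e21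
    (fun τ hτ ↦ mod_cast e21_add_two hτ) tendsto_e21
  obtain ⟨d, h, h'⟩ := exists_tendsto_div_qParam two_pos
    (differentiableOn_e31.sub differentiableOn_e21)
    (fun τ hτ ↦ by simp [e21_add_two hτ, e31_add_two hτ]) tendsto_e31_sub_e21
  have hW := (tendsto_e21.mul h').sub (h21.mul tendsto_e31_sub_e21)
  have hP := ((tendsto_e21.mul tendsto_e31).mul h).const_mul (I / Real.pi : ℂ)
  have hlim : -Real.pi ^ 2 * (2 * Real.pi * I / (2 : ℝ) * d) - 2 * Real.pi * I / (2 : ℝ) * d₁ * 0 +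
      I / Real.pi * (-Real.pi ^ 2 * -Real.pi ^ 2 * d) = 0 := by
    push_cast
    field_simp
    ring
  rw [← hlim]
  refine (hW.add hP).congr' ?_
  filter_upwards [eventually_mem_upperHalfPlaneSet] with τ hτ
  rw [Pi.add_apply, Pi.smul_apply, smul_eq_mul, diffProd, Pi.mul_apply, Pi.mul_apply,
    ← wronskian_sub_left_right (differentiableAt_e21 hτ) (differentiableAt_e31 hτ), wronskian,
    sub_zero]
  ring

lemma wronskian_e21_e31_eq {τ : ℂ} (hτ : τ ∈ ℍₒ) :
    wronskian e21 e31 τ = -(I / Real.pi) * diffProd τ := by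
  rw [neg_mul]
  exact eq_neg_of_add_eq_zero_left <| (isSignModular_wronskian_e21_e31.add
    (isSignModular_diffProd.const_smul _)).eqOn_zero_of_tendsto_div_qParam
      tendsto_wronskian_add_diffProd_div_qParam hτ

lemma not_eqOn_zero_of_tendsto {f : ℂ → ℂ} {l : ℂ} (hf : Tendsto f I∞ (𝓝 l)) (hl : l ≠ 0) :
    ¬ Set.EqOn f 0 ℍₒ := fun h ↦
  hl (tendsto_nhds_unique_of_eventuallyEq hf tendsto_const_nhds
    (eventually_mem_upperHalfPlaneSet.mono fun _ hτ ↦ h hτ))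

lemma not_eqOn_e31_e21 : ¬ Set.EqOn e31 e21 ℍₒ := by
  intro h
  refine not_eqOn_zero_of_tendsto tendsto_e31 (by simp [Real.pi_ne_zero]) fun τ hτ ↦ ?_
  have hτ₀ := ne_zero_of_mem_upperHalfPlaneSet hτ
  have hτ' := neg_one_div_mem_upperHalfPlaneSet hτ
  have hinv : -1 / (-1 / τ) = τ := by field_simp
  rw [← hinv, e31_neg_one_div hτ', h hτ', sub_self, mul_zero, Pi.zero_apply]

lemma exists_diffProd_ne_zero : ∃ τ ∈ ℍₒ, diffProd τ ≠ 0 := by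
  by_contra! H
  have hconn : IsPreconnected ℍₒ := (convex_halfSpace_im_gt 0).isPreconnected
  have h21 := differentiableOn_e21.analyticOnNhd isOpen_upperHalfPlaneSet
  have h31 := differentiableOn_e31.analyticOnNhd isOpen_upperHalfPlaneSet
  have hpi : -(Real.pi : ℂ) ^ 2 ≠ 0 := by simp [Real.pi_ne_zero]
  rcases (h21.mul h31).eq_zero_or_eq_zero_of_mul_eq_zero (h31.sub h21) H hconn with h | h
  · rcases h21.eq_zero_or_eq_zero_of_mul_eq_zero h31 h hconn with h | h
    · exact not_eqOn_zero_of_tendsto tendsto_e21 hpi fun τ ↦ h τ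
    · exact not_eqOn_zero_of_tendsto tendsto_e31 hpi fun τ ↦ h τ
  · exact not_eqOn_e31_e21 fun τ hτ ↦ sub_eq_zero.1 (h τ hτ)

lemma e21_ne_zero {τ : ℂ} (hτ : τ ∈ ℍₒ) : e21 τ ≠ 0 := by
  have h := isSignModular_diffProd.ne_zero tendsto_diffProd exists_diffProd_ne_zero τ hτ
  exact left_ne_zero_of_mul (left_ne_zero_of_mul h)

end RootDifferences

/-- formula (II-134): `t(τ) = (e₃-e₁)/(e₂-e₁)` is holomorphic on `ℍ` and
`dt/dτ = -(i/π) t(t-1)(e₂-e₁)`. -/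
theorem tau_deriv_lambda_modular :
    DifferentiableOn ℂ (fun τ => (e3 τ - e1 τ) / (e2 τ - e1 τ)) {τ : ℂ | 0 < τ.im} ∧
    ∀ τ : ℂ, 0 < τ.im →
      HasDerivAt (fun τ' => (e3 τ' - e1 τ') / (e2 τ' - e1 τ'))
        (-(Complex.I / (Real.pi : ℂ)) * ((e3 τ - e1 τ) / (e2 τ - e1 τ))
          * ((e3 τ - e1 τ) / (e2 τ - e1 τ) - 1) * (e2 τ - e1 τ)) τ := by
  have key (τ : ℂ) (hτ : τ ∈ ℍₒ) : HasDerivAt (e31 / e21)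
      (-(I / Real.pi) * (e31 τ / e21 τ) * (e31 τ / e21 τ - 1) * e21 τ) τ := by
    have h21 := e21_ne_zero hτ
    refine (hasDerivAt_div_of_wronskian (differentiableAt_e21 hτ) (differentiableAt_e31 hτ)
      h21).congr_deriv ?_
    rw [wronskian_e21_e31_eq hτ, diffProd, Pi.mul_apply, Pi.mul_apply, Pi.sub_apply]
    field_simp
  exact ⟨fun τ hτ ↦ (key τ hτ).differentiableAt.differentiableWithinAt, key⟩
end
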